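/- Let T : M → M be any mapping. Then T commutes with the utility transform T^u for every increasing left-continuous u : ℝ → ℝ if and only if there exists a right-continuous distortion function d ∈ F_D^R such that T = T_d. -/

import Mathlib

/-!
For an increasing left-continuous `u`, each set `{u ≤ x}` is `∅`, `ℝ` or a half-line `(-∞, s]`
(`sublevel_cases`), so `T^u F x` is `0`, `1` or `F s`. A right-continuous distortion acts by
`T_d F = d ∘ F` (`distortT_eq_comp`); as `d 0 = 0` and `d 1 = 1`, it commutes with every `T^u`.

Conversely, let `U` be the uniform cdf on `[0,1]` and `G = T U`. Every `F` in `M` is `T^q U`, where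
`q` is the left quantile function of `F`, extended to `ℝ` by a value `a` with `F a = 0` on `(-∞, 0]`
(`quantU`, `utilityT_quantU_unif`). Commutation gives `T F = T^q G`, and the sublevel sets of `q`
show that `T^q G x = G (F x)` if `a ≤ x` and `F x < 1`, while it is `1` if `a ≤ x` and `F x = 1`,
and `0` if `x < a`. Since `a` is arbitrary among the zeros of `F`, comparing two choices yields
`G 0 = 0`, and `d = G` on `[0,1)`, `d 1 = 1` is the required distortion function.
-/

open MeasureTheory Filter Topology Set

noncomputable section

/-- The set of cdfs of compactly supported probability distributions on ℝ:
increasing, right-continuous, equal to `0` for all sufficiently small `x` and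
equal to `1` for all sufficiently large `x`. -/
def mSet : Set (ℝ → ℝ) :=
  {F | Monotone F ∧ (∀ x, ContinuousWithinAt F (Set.Ici x) x) ∧
    (∃ a, ∀ x ≤ a, F x = 0) ∧ (∃ b, ∀ x, b ≤ x → F x = 1)}

/-- The set of cdfs of all probability distributions on ℝ: increasing,
right-continuous, with limit `0` at `-∞` and limit `1` at `+∞`. -/
def m0Set : Set (ℝ → ℝ) :=
  {F | Monotone F ∧ (∀ x, ContinuousWithinAt F (Set.Ici x) x) ∧
    Tendsto F atBot (𝓝 0) ∧ Tendsto F atTop (𝓝 1)}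

/-- A utility function: increasing (non-strict) and continuous. -/
def IsUF (u : ℝ → ℝ) : Prop := Monotone u ∧ Continuous u

/-- An increasing and left-continuous function on ℝ. -/
def IsLeftCtsIncr (u : ℝ → ℝ) : Prop :=
  Monotone u ∧ ∀ x, ContinuousWithinAt u (Set.Iic x) x

/-- A distortion function: an increasing function `d : [0,1] → [0,1]` with
`d 0 = 0` and `d 1 = 1` (values outside `[0,1]` are irrelevant). -/
def IsDF (d : ℝ → ℝ) : Prop :=
  MonotoneOn d (Set.Icc 0 1) ∧ d 0 = 0 ∧ d 1 = 1

/-- Right-continuity of a distortion function on `[0,1)`. -/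
def DFRightCts (d : ℝ → ℝ) : Prop :=
  ∀ x ∈ Set.Ico (0:ℝ) 1, ContinuousWithinAt d (Set.Ioi x) x

/-- A distortion function with moreover `d(0+) = 0` and `d(1-) = 1`. -/
def IsDFhat (d : ℝ → ℝ) : Prop :=
  IsDF d ∧ Tendsto d (𝓝[>] (0:ℝ)) (𝓝 0) ∧ Tendsto d (𝓝[<] (1:ℝ)) (𝓝 1)

/-- The probability distortion generated by `d`:  `T_d F x = (d ∘ F)(x+)`,
the right limit of `d ∘ F` at `x`. -/
noncomputable def distortT (d F : ℝ → ℝ) : ℝ → ℝ :=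
  fun x => Function.rightLim (d ∘ F) x

/-- The utility transform `T^u`: it maps a cdf `F` to the cdf of the
pushforward under `u` of the probability measure with cdf `F`. -/
noncomputable def utilityT (u F : ℝ → ℝ) : ℝ → ℝ := by
  classical
  exact
    if h : Monotone F ∧ ∀ x, ContinuousWithinAt F (Set.Ici x) x then
      fun x => ((StieltjesFunction.measure ⟨F, h.1, h.2⟩).map u (Set.Iic x)).toReal
    else F

/-- Left quantile `F_L^{-1}(p) = inf {x | F x ≥ p}`. -/
noncomputable def leftQ (F : ℝ → ℝ) (p : ℝ) : ℝ := sInf {x | p ≤ F x}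

/-- Right quantile `F_R^{-1}(p) = inf {x | F x > p}`. -/
noncomputable def rightQ (F : ℝ → ℝ) (p : ℝ) : ℝ := sInf {x | p < F x}

/-! ### The utility transform on cdfs -/

/-- The sublevel sets of an increasing left-continuous function are closed lower sets of `ℝ`. -/
lemma sublevel_cases {u : ℝ → ℝ} (hu : IsLeftCtsIncr u) (x : ℝ) :
    {y | u y ≤ x} = ∅ ∨ {y | u y ≤ x} = univ ∨ ∃ s, {y | u y ≤ x} = Iic s := by
  rcases eq_empty_or_nonempty {y | u y ≤ x} with h0 | hne
  · exact Or.inl h0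
  by_cases h1 : {y | u y ≤ x} = univ
  · exact Or.inr (Or.inl h1)
  refine Or.inr (Or.inr ⟨sSup {y | u y ≤ x}, ?_⟩)
  obtain ⟨z, hz⟩ := (ne_univ_iff_exists_notMem _).1 h1
  have hbdd : BddAbove {y | u y ≤ x} := by
    refine ⟨z, fun y hy => ?_⟩
    by_contra hlt
    exact hz ((hu.1 (not_le.1 hlt).le).trans hy)
  have hs : u (sSup {y | u y ≤ x}) ≤ x := by
    by_contra hlt
    have hev : {y | x < u y} ∈ 𝓝[≤] (sSup {y | u y ≤ x}) :=
      (hu.2 _).eventually (lt_mem_nhds (not_le.1 hlt))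
    obtain ⟨l, hl, hsub⟩ := mem_nhdsLE_iff_exists_Ioc_subset.1 hev
    obtain ⟨y, hy, hly⟩ := exists_lt_of_lt_csSup hne hl
    have h1 : x < u y := hsub ⟨hly, le_csSup hbdd hy⟩
    have h2 : u y ≤ x := hy
    exact absurd h2 (not_le.2 h1)
  ext y
  exact ⟨fun hy => le_csSup hbdd hy, fun hy => (hu.1 hy).trans hs⟩

/-- The Stieltjes function given by a cdf in `mSet`. -/
def toStieltjes {F : ℝ → ℝ} (hF : F ∈ mSet) : StieltjesFunction ℝ := ⟨F, hF.1, hF.2.1⟩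

lemma mSet_tendsto_atBot {F : ℝ → ℝ} (hF : F ∈ mSet) : Tendsto F atBot (𝓝 0) := by
  obtain ⟨a, ha⟩ := hF.2.2.1
  refine tendsto_const_nhds.congr' ?_
  filter_upwards [eventually_le_atBot a] with x hx using (ha x hx).symm

lemma mSet_tendsto_atTop {F : ℝ → ℝ} (hF : F ∈ mSet) : Tendsto F atTop (𝓝 1) := by
  obtain ⟨b, hb⟩ := hF.2.2.2
  refine tendsto_const_nhds.congr' ?_
  filter_upwards [eventually_ge_atTop b] with x hx using (hb x hx).symm

lemma mSet_nonneg {F : ℝ → ℝ} (hF : F ∈ mSet) (x : ℝ) : 0 ≤ F x :=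
  hF.1.le_of_tendsto (mSet_tendsto_atBot hF) x

lemma mSet_le_one {F : ℝ → ℝ} (hF : F ∈ mSet) (x : ℝ) : F x ≤ 1 :=
  hF.1.ge_of_tendsto (mSet_tendsto_atTop hF) x

lemma isProb_toStieltjes {F : ℝ → ℝ} (hF : F ∈ mSet) :
    IsProbabilityMeasure (toStieltjes hF).measure :=
  (toStieltjes hF).isProbabilityMeasure (mSet_tendsto_atBot hF) (mSet_tendsto_atTop hF)

lemma utilityT_eq_map {u F : ℝ → ℝ} (hF : F ∈ mSet) :
    utilityT u F = fun x => ((toStieltjes hF).measure.map u (Iic x)).toReal := by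
  have h : Monotone F ∧ ∀ x, ContinuousWithinAt F (Set.Ici x) x := ⟨hF.1, hF.2.1⟩
  unfold utilityT
  rw [dif_pos h]
  rfl

lemma utilityT_apply {u F : ℝ → ℝ} (hu : Monotone u) (hF : F ∈ mSet) (x : ℝ) :
    utilityT u F x = ((toStieltjes hF).measure {y | u y ≤ x}).toReal := by
  rw [utilityT_eq_map hF]
  simp only
  rw [Measure.map_apply hu.measurable measurableSet_Iic]
  rfl

lemma utilityT_of_empty {u F : ℝ → ℝ} (hu : Monotone u) (hF : F ∈ mSet) {x : ℝ}
    (h : {y | u y ≤ x} = ∅) : utilityT u F x = 0 := by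
  rw [utilityT_apply hu hF, h]; simp

lemma utilityT_of_univ {u F : ℝ → ℝ} (hu : Monotone u) (hF : F ∈ mSet) {x : ℝ}
    (h : {y | u y ≤ x} = univ) : utilityT u F x = 1 := by
  have := isProb_toStieltjes hF
  rw [utilityT_apply hu hF, h]; simp

lemma utilityT_of_Iic {u F : ℝ → ℝ} (hu : Monotone u) (hF : F ∈ mSet) {x s : ℝ}
    (h : {y | u y ≤ x} = Iic s) : utilityT u F x = F s := by
  rw [utilityT_apply hu hF, h,
    StieltjesFunction.measure_Iic (toStieltjes hF) (mSet_tendsto_atBot hF), sub_zero]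
  exact ENNReal.toReal_ofReal (mSet_nonneg hF s)

lemma utilityT_mem {u F : ℝ → ℝ} (hu : IsLeftCtsIncr u) (hF : F ∈ mSet) :
    utilityT u F ∈ mSet := by
  have := isProb_toStieltjes hF
  have hprob : IsProbabilityMeasure ((toStieltjes hF).measure.map u) :=
    Measure.isProbabilityMeasure_map hu.1.measurable.aemeasurable
  have hcdf : utilityT u F = ProbabilityTheory.cdf ((toStieltjes hF).measure.map u) := by
    rw [utilityT_eq_map hF]
    funext x
    rw [ProbabilityTheory.cdf_eq_real]
    rfl
  obtain ⟨a, ha⟩ := hF.2.2.1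
  obtain ⟨b, hb⟩ := hF.2.2.2
  refine ⟨?_, ?_, ⟨u a - 1, fun x hx => ?_⟩, ⟨u b, fun x hx => ?_⟩⟩
  · rw [hcdf]; exact ProbabilityTheory.monotone_cdf _
  · rw [hcdf]; exact fun x => (ProbabilityTheory.cdf _).right_continuous x
  · have hna : a ∉ {y | u y ≤ x} := fun h => by
      have : u a ≤ x := h
      linarith
    rcases sublevel_cases hu x with h | h | ⟨s, h⟩
    · exact utilityT_of_empty hu.1 hF h
    · rw [h] at hna; exact absurd (mem_univ a) hna
    · rw [utilityT_of_Iic hu.1 hF h]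
      rw [h] at hna
      exact ha s (not_le.1 hna).le
  · have hmb : b ∈ {y | u y ≤ x} := hx
    rcases sublevel_cases hu x with h | h | ⟨s, h⟩
    · rw [h] at hmb; exact absurd hmb (notMem_empty b)
    · exact utilityT_of_univ hu.1 hF h
    · rw [utilityT_of_Iic hu.1 hF h]
      rw [h] at hmb
      exact hb s hmb

/-! ### Right-continuous distortions act by composition -/

lemma distortT_eq_comp {d F : ℝ → ℝ} (hd : IsDF d) (hr : DFRightCts d) (hF : F ∈ mSet) :
    distortT d F = d ∘ F := by
  have hmem : ∀ x, F x ∈ Icc (0 : ℝ) 1 := fun x => ⟨mSet_nonneg hF x, mSet_le_one hF x⟩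
  have hmono : Monotone (d ∘ F) := fun x y hxy => hd.1 (hmem x) (hmem y) (hF.1 hxy)
  funext x
  refine (hmono.continuousWithinAt_Ioi_iff_rightLim_eq).1 ?_
  rcases (mSet_le_one hF x).eq_or_lt with h1 | h1
  · have hc : ∀ y ∈ Ioi x, (d ∘ F) y = (fun _ => d 1) y := fun y hy => by
      have : F y = 1 := le_antisymm (mSet_le_one hF y) (h1 ▸ hF.1 (le_of_lt hy))
      simp [this]
    exact continuousWithinAt_const.congr hc (by simp [h1])
  · -- `F y` may equal `F x`, so right-continuity of `d` is used on the closed half-line.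
    have hd' : ContinuousWithinAt d (Ici (F x)) (F x) :=
      continuousWithinAt_Ioi_iff_Ici.1 (hr (F x) ⟨mSet_nonneg hF x, h1⟩)
    exact hd'.comp ((hF.2.1 x).mono Ioi_subset_Ici_self) fun y hy => hF.1 (le_of_lt hy)

/-! ### Quantile functions as utilities -/

/-- The left quantile function of `F`, extended to all of `ℝ`: it equals `a` on `(-∞, 0]`
(where `a` is a point with `F a = 0`) and is constant on `[1, ∞)`. -/
def quantU (a : ℝ) (F : ℝ → ℝ) (p : ℝ) : ℝ := sInf {x | a ≤ x ∧ min p 1 ≤ F x}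

lemma quantU_le_iff {F : ℝ → ℝ} (hF : F ∈ mSet) (a p x : ℝ) :
    quantU a F p ≤ x ↔ a ≤ x ∧ min p 1 ≤ F x := by
  obtain ⟨b, hb⟩ := hF.2.2.2
  have hne : {x | a ≤ x ∧ min p 1 ≤ F x}.Nonempty :=
    ⟨max a b, le_max_left _ _, by rw [hb _ (le_max_right _ _)]; exact min_le_right _ _⟩
  have hbdd : BddBelow {x | a ≤ x ∧ min p 1 ≤ F x} := ⟨a, fun y hy => hy.1⟩
  refine ⟨fun h => ⟨(le_csInf hne fun y hy => hy.1).trans h, ?_⟩, fun h => csInf_le hbdd h⟩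
  have ht : Tendsto F (𝓝[>] x) (𝓝 (F x)) := (hF.2.1 x).mono Ioi_subset_Ici_self
  refine ge_of_tendsto ht ?_
  filter_upwards [self_mem_nhdsWithin] with y hy
  obtain ⟨z, hz, hzy⟩ := exists_lt_of_csInf_lt hne (lt_of_le_of_lt h hy)
  exact hz.2.trans (hF.1 hzy.le)

lemma quantU_sublevel_lt {F : ℝ → ℝ} (hF : F ∈ mSet) {a x : ℝ} (hx : x < a) :
    {p | quantU a F p ≤ x} = ∅ := by
  ext p
  simp [quantU_le_iff hF, hx]

lemma quantU_sublevel_one {F : ℝ → ℝ} (hF : F ∈ mSet) {a x : ℝ} (hx : a ≤ x) (h1 : F x = 1) :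
    {p | quantU a F p ≤ x} = univ := by
  ext p
  simp [quantU_le_iff hF, hx, h1]

lemma quantU_sublevel {F : ℝ → ℝ} (hF : F ∈ mSet) {a x : ℝ} (hx : a ≤ x) (h1 : F x < 1) :
    {p | quantU a F p ≤ x} = Iic (F x) := by
  ext p
  simp [quantU_le_iff hF, hx, h1]

lemma quantU_mono {F : ℝ → ℝ} (hF : F ∈ mSet) (a : ℝ) : Monotone (quantU a F) := by
  intro p q hpq
  have h := (quantU_le_iff hF a q _).1 le_rfl
  exact (quantU_le_iff hF a p _).2 ⟨h.1, (min_le_min_right 1 hpq).trans h.2⟩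

lemma quantU_leftCts {F : ℝ → ℝ} (hF : F ∈ mSet) (a : ℝ) : IsLeftCtsIncr (quantU a F) := by
  refine ⟨quantU_mono hF a, fun p => tendsto_order.2 ⟨fun c hc => ?_, fun c hc => ?_⟩⟩
  · have hcl : IsClosed {q | quantU a F q ≤ c} := by
      rcases lt_or_ge c a with h | h
      · rw [quantU_sublevel_lt hF h]; exact isClosed_empty
      rcases (mSet_le_one hF c).eq_or_lt with h1 | h1
      · rw [quantU_sublevel_one hF h h1]; exact isClosed_univ
      · rw [quantU_sublevel hF h h1]; exact isClosed_Iic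
    have hp : p ∈ {q | quantU a F q ≤ c}ᶜ := not_le.2 hc
    filter_upwards [mem_nhdsWithin_of_mem_nhds (hcl.isOpen_compl.mem_nhds hp)] with q hq
    exact not_le.1 hq
  · filter_upwards [self_mem_nhdsWithin] with q hq
    exact (quantU_mono hF a hq).trans_lt hc

/-- The cdf of the uniform distribution on `[0,1]`. -/
def unifCdf (x : ℝ) : ℝ := max 0 (min x 1)

lemma unifCdf_mem : unifCdf ∈ mSet := by
  refine ⟨fun x y h => ?_, fun x => ?_, ⟨0, fun x hx => ?_⟩, ⟨1, fun x hx => ?_⟩⟩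
  · exact max_le_max_left 0 (min_le_min_right 1 h)
  · have : Continuous unifCdf := by unfold unifCdf; fun_prop
    exact this.continuousWithinAt
  · exact max_eq_left ((min_le_left _ _).trans hx)
  · simp [unifCdf, hx]

/-- Inverse transform sampling: the quantile function of `F` pushes the uniform distribution
forward to `F`. -/
lemma utilityT_quantU_unif {F : ℝ → ℝ} (hF : F ∈ mSet) {a : ℝ} (ha : F a = 0) :
    utilityT (quantU a F) unifCdf = F := by
  have hm := quantU_mono hF a
  funext x
  rcases lt_or_ge x a with h | h
  · rw [utilityT_of_empty hm unifCdf_mem (quantU_sublevel_lt hF h)]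
    exact le_antisymm (mSet_nonneg hF x) (ha ▸ hF.1 h.le)
  rcases (mSet_le_one hF x).eq_or_lt with h1 | h1
  · rw [utilityT_of_univ hm unifCdf_mem (quantU_sublevel_one hF h h1), h1]
  · rw [utilityT_of_Iic hm unifCdf_mem (quantU_sublevel hF h h1)]
    simp [unifCdf, h1.le, mSet_nonneg hF x]

/-- A map `T : M → M` commutes with the utility transform `T^u` for every
increasing left-continuous `u : ℝ → ℝ` if and only if `T = T_d` for some
right-continuous distortion function `d`. -/
theorem stmt6 (T : (ℝ → ℝ) → ℝ → ℝ) (hT : ∀ F ∈ mSet, T F ∈ mSet) :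
    (∀ u : ℝ → ℝ, IsLeftCtsIncr u → ∀ F ∈ mSet,
        T (utilityT u F) = utilityT u (T F)) ↔
      ∃ d : ℝ → ℝ, IsDF d ∧ DFRightCts d ∧ ∀ F ∈ mSet, T F = distortT d F := by
  constructor
  · intro hcomm
    have hG : T unifCdf ∈ mSet := hT _ unifCdf_mem
    have key : ∀ F ∈ mSet, ∀ a, F a = 0 → T F = utilityT (quantU a F) (T unifCdf) := by
      intro F hF a ha
      rw [← hcomm _ (quantU_leftCts hF a) _ unifCdf_mem, utilityT_quantU_unif hF ha]
    -- The choices `a = -1` and `a = 0` give the values `T unifCdf 0` and `0` at `-1/2`.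
    have hG0 : T unifCdf 0 = 0 := by
      have hv : unifCdf (-1 / 2) = 0 := by norm_num [unifCdf]
      have e1 := congrFun (key _ unifCdf_mem (-1) (by norm_num [unifCdf])) (-1 / 2)
      have e2 := congrFun (key _ unifCdf_mem 0 (by norm_num [unifCdf])) (-1 / 2)
      rw [utilityT_of_Iic (quantU_mono unifCdf_mem _) hG
        (quantU_sublevel unifCdf_mem (by norm_num) (by rw [hv]; norm_num)), hv] at e1
      rw [utilityT_of_empty (quantU_mono unifCdf_mem _) hG
        (quantU_sublevel_lt unifCdf_mem (by norm_num))] at e2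
      rw [← e1, e2]
    -- The value `1` at `1` is prescribed, so `T unifCdf 1` need not be computed.
    set d : ℝ → ℝ := fun p => if p < 1 then T unifCdf p else 1 with hd_def
    have hd : IsDF d := by
      refine ⟨fun p _ q _ hpq => ?_, by simp [hd_def, hG0], by simp [hd_def]⟩
      simp only [hd_def]
      split_ifs with h1 h2 h2
      · exact hG.1 hpq
      · exact mSet_le_one hG p
      · exact absurd (hpq.trans_lt h2) h1
      · exact le_rfl
    have hr : DFRightCts d := by
      intro p hp
      have hev : d =ᶠ[𝓝 p] T unifCdf := by
        filter_upwards [Iio_mem_nhds hp.2] with q hq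
        exact if_pos hq
      exact ((hG.2.1 p).mono Ioi_subset_Ici_self).congr_of_eventuallyEq
        (hev.filter_mono nhdsWithin_le_nhds) hev.self_of_nhds
    refine ⟨d, hd, hr, fun F hF => ?_⟩
    rw [distortT_eq_comp hd hr hF]
    obtain ⟨a, ha⟩ := hF.2.2.1
    have hm := quantU_mono hF a
    rw [key F hF a (ha a le_rfl)]
    funext x
    rcases lt_or_ge x a with h | h
    · rw [utilityT_of_empty hm hG (quantU_sublevel_lt hF h)]
      simp [ha x h.le, hd.2.1]
    rcases (mSet_le_one hF x).eq_or_lt with h1 | h1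
    · rw [utilityT_of_univ hm hG (quantU_sublevel_one hF h h1)]
      simp [h1, hd.2.2]
    · rw [utilityT_of_Iic hm hG (quantU_sublevel hF h h1)]
      simp [hd_def, h1]
  · rintro ⟨d, hd, hr, hTd⟩ u hu F hF
    rw [hTd _ (utilityT_mem hu hF), distortT_eq_comp hd hr (utilityT_mem hu hF)]
    have hTF : T F = d ∘ F := by rw [hTd F hF, distortT_eq_comp hd hr hF]
    funext x
    rcases sublevel_cases hu x with h | h | ⟨s, h⟩
    · rw [utilityT_of_empty hu.1 (hT F hF) h]
      simp [utilityT_of_empty hu.1 hF h, hd.2.1]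
    · rw [utilityT_of_univ hu.1 (hT F hF) h]
      simp [utilityT_of_univ hu.1 hF h, hd.2.2]
    · rw [utilityT_of_Iic hu.1 (hT F hF) h, hTF]
      simp [utilityT_of_Iic hu.1 hF h]
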